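/- arXiv:1105.2363 — 4 statements merged into one kernel-verified Lean document; each statement's English description precedes it below -/
import Mathlib

section
/- Let (k_1, l_1, ι_1) and (k_2, l_2, ι_2) be admissible triplets. Then the stratum Σ^{k_1,l_1}_{ι_1} is contained in the stratum Σ^{k_2,l_2}_{ι_2} if and only if k_2 ≥ k_1 and ι_1 can be split into two disjoint subsets ι_1 = ῑ_1 ∪ ι̿_1 such that ῑ_1 ⊆ ι_2 and card(ι̿_1) ≤ k_2 − k_1 (equivalently: k_2 ≥ k_1 and card(ι_1 \ ι_2) ≤ k_2 − k_1). -/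
/-!
A probability measure lies in `Stratum p k ι` exactly when it is concentrated on `p(ι) ∪ S` for some
set `S` of at most `k` points. Uniform measures on finite sets therefore turn the inclusion of
strata into a statement about finite sets: every `p(ι₁) ∪ S₁` with `|S₁| ≤ k₁` is contained in some
`p(ι₂) ∪ S₂` with `|S₂| ≤ k₂`. Choosing `S₁` to consist of `k₁` points off `p(ι₁) ∪ p(ι₂)` forces
`S₂` to contain both `p(ι₁) \ p(ι₂)` and `S₁`, and conversely `S₂ = (p(ι₁) \ p(ι₂)) ∪ S₁` always
suffices.
-/

open MeasureTheory Metric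
open scoped NNReal ENNReal BigOperators

variable {X : Type*}

/-- The stratum `Σ^{k,l}_ι`: all probability measures of the form
`s_1 δ_{p_{i_1}} + … + s_l δ_{p_{i_l}} + t_1 δ_{q_1} + … + t_k δ_{q_k}`. -/
def Stratum [MeasurableSpace X] {m : ℕ} (p : Fin m → X) (k : ℕ) (ι : Finset (Fin m)) :
    Set (Measure X) :=
  {μ | ∃ (s : Fin m → ℝ≥0) (t : Fin k → ℝ≥0) (q : Fin k → X),
    ((∑ i ∈ ι, s i) + ∑ j, t j = 1) ∧
    μ = (∑ i ∈ ι, ((s i : ℝ≥0∞) • Measure.dirac (p i)))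
        + ∑ j, ((t j : ℝ≥0∞) • Measure.dirac (q j))}

/-- Admissibility of a triplet `(k, l, ι)` (with `l = ι.card`):
`4π (k + Σ_{j ∈ ι} (1 + α_j)) < ρ`. -/
def Admissible {m : ℕ} (α : Fin m → ℝ) (ρ : ℝ) (k : ℕ) (ι : Finset (Fin m)) : Prop :=
  4 * Real.pi * ((k : ℝ) + ∑ j ∈ ι, (1 + α j)) < ρ

open Finset ProbabilityTheory

section FiniteSets

theorem exists_subset_range_of_card_le {κ : Type*} [Fintype κ] [Nonempty X] {S : Finset X}
    (hS : #S ≤ Fintype.card κ) : ∃ q : κ → X, (S : Set X) ⊆ Set.range q := by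
  obtain ⟨e⟩ : Nonempty (S ↪ κ) :=
    Function.Embedding.nonempty_of_card_le (by rwa [Fintype.card_coe])
  refine ⟨Function.extend e (↑) fun _ => Classical.arbitrary X, fun x hx => ⟨e ⟨x, hx⟩, ?_⟩⟩
  exact e.injective.extend_apply _ _ _

theorem forall_exists_union_subset_union_iff [Infinite X] [DecidableEq X] {A B : Finset X}
    {k l : ℕ} :
    (∀ S : Finset X, #S ≤ k → ∃ T : Finset X, #T ≤ l ∧ A ∪ S ⊆ B ∪ T) ↔ #(A \ B) + k ≤ l := by
  constructor
  · intro h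
    obtain ⟨S, hSAB, hSk⟩ := (A ∪ B).finite_toSet.infinite_compl.exists_subset_card_eq k
    obtain ⟨hAS, hBS⟩ : Disjoint A S ∧ Disjoint B S := by
      rw [← disjoint_union_left, ← disjoint_coe]
      exact Set.subset_compl_iff_disjoint_left.mp hSAB
    obtain ⟨T, hTl, hT⟩ := h S hSk.le
    have hsub : A \ B ∪ S ⊆ T := by
      rw [← sdiff_eq_self_of_disjoint hBS.symm, ← union_sdiff_distrib]
      exact sdiff_le_iff.mpr hT
    calc #(A \ B) + k = #(A \ B ∪ S) := by
          rw [card_union_of_disjoint (hAS.mono_left sdiff_subset), hSk]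
      _ ≤ #T := card_le_card hsub
      _ ≤ l := hTl
  · intro h S hS
    refine ⟨A \ B ∪ S, (card_union_le _ _).trans (by lia), ?_⟩
    rw [← union_assoc, union_sdiff_self_eq_union]
    exact union_subset_union_left subset_union_right

end FiniteSets

section SumDirac

variable {κ : Type*} [MeasurableSpace X]

theorem sum_smul_dirac_apply_univ (s : Finset κ) (c : κ → ℝ≥0∞) (q : κ → X) :
    (∑ i ∈ s, c i • Measure.dirac (q i)) Set.univ = ∑ i ∈ s, c i := by
  simp [Measure.finsetSum_apply]

variable [MeasurableSingletonClass X] [DecidableEq X]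

theorem ae_mem_image_sum_smul_dirac (s : Finset κ) (c : κ → ℝ≥0∞) (q : κ → X) :
    ∀ᵐ x ∂∑ i ∈ s, c i • Measure.dirac (q i), x ∈ s.image q := by
  rw [ae_finsetSum_measure_iff]
  intro i hi
  apply Measure.ae_smul_measure
  rw [ae_dirac_eq]
  exact mem_image_of_mem q hi

theorem exists_eq_sum_smul_dirac {μ : Measure X} [IsFiniteMeasure μ] {s : Finset κ} {q : κ → X}
    (hμ : ∀ᵐ x ∂μ, x ∈ s.image q) :
    ∃ c : κ → ℝ≥0, μ = ∑ i ∈ s, (c i : ℝ≥0∞) • Measure.dirac (q i) := by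
  classical
  -- `q` may repeat points, so all the mass of a point is put on one chosen index.
  obtain ⟨u, hus, hqu, hq⟩ := exists_subset_injOn_image_eq_of_surjOn (s : Set κ) (s.image q)
    (f := q) (by simp [Set.surjOn_image])
  refine ⟨fun i => if i ∈ u then (μ {q i}).toNNReal else 0, ?_⟩
  calc μ = ∑ x ∈ s.image q, μ {x} • Measure.dirac x := Measure.ae_mem_finset_iff.mp hμ
    _ = ∑ i ∈ u, μ {q i} • Measure.dirac (q i) := by rw [← hq, sum_image hqu]
    _ = ∑ i ∈ s, if i ∈ u then μ {q i} • Measure.dirac (q i) else 0 := by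
      rw [sum_ite_mem, inter_eq_right.mpr (coe_subset.mp hus)]
    _ = _ := sum_congr rfl fun i _ => by
      split_ifs <;> simp [ENNReal.coe_toNNReal, *]

end SumDirac

section Stratum

variable [MeasurableSpace X] {m : ℕ} {p : Fin m → X} {k k₁ k₂ : ℕ} {ι ι₁ ι₂ : Finset (Fin m)}

theorem mem_stratum_iff_exists_sum_smul_dirac {μ : Measure X} :
    μ ∈ Stratum p k ι ↔ IsProbabilityMeasure μ ∧ ∃ (q : Fin k → X) (c : Fin m ⊕ Fin k → ℝ≥0),
      μ = ∑ a ∈ ι.disjSum univ, (c a : ℝ≥0∞) • Measure.dirac (Sum.elim p q a) := by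
  constructor
  · rintro ⟨s, t, q, hst, hμ⟩
    have hμ' : μ = ∑ a ∈ ι.disjSum univ,
        ((Sum.elim s t a : ℝ≥0) : ℝ≥0∞) • Measure.dirac (Sum.elim p q a) := by
      simpa [sum_disjSum] using hμ
    refine ⟨⟨?_⟩, q, Sum.elim s t, hμ'⟩
    rw [hμ', sum_smul_dirac_apply_univ, sum_disjSum]
    exact_mod_cast hst
  · rintro ⟨hprob, q, c, hμ⟩
    refine ⟨c ∘ Sum.inl, c ∘ Sum.inr, q, ?_, by simpa [sum_disjSum] using hμ⟩
    have hmass := hprob.measure_univ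
    rw [hμ, sum_smul_dirac_apply_univ, sum_disjSum] at hmass
    exact_mod_cast hmass

variable [MeasurableSingletonClass X] [DecidableEq X]

theorem mem_stratum_iff_ae_mem {μ : Measure X} :
    μ ∈ Stratum p k ι ↔ IsProbabilityMeasure μ ∧
      ∃ S : Finset X, #S ≤ k ∧ ∀ᵐ x ∂μ, x ∈ ι.image p ∪ S := by
  have himage (q : Fin k → X) :
      (ι.disjSum univ).image (Sum.elim p q) = ι.image p ∪ univ.image q := by
    ext; simp
  rw [mem_stratum_iff_exists_sum_smul_dirac]
  refine and_congr_right fun hprob => ⟨?_, ?_⟩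
  · rintro ⟨q, c, rfl⟩
    refine ⟨univ.image q, card_image_le.trans_eq (card_fin k), ?_⟩
    rw [← himage]
    exact ae_mem_image_sum_smul_dirac _ _ _
  · rintro ⟨S, hSk, hS⟩
    have := nonempty_of_isProbabilityMeasure μ
    obtain ⟨q, hq⟩ := exists_subset_range_of_card_le (hSk.trans_eq (Fintype.card_fin k).symm)
    refine ⟨q, exists_eq_sum_smul_dirac ?_⟩
    rw [himage]
    filter_upwards [hS] with x hx
    exact union_subset_union_right (fun y hy => by simpa using hq hy) hx

theorem uniformOn_mem_stratum_iff {A : Finset X} (hA : A.Nonempty) :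
    uniformOn (A : Set X) ∈ Stratum p k ι ↔ ∃ S : Finset X, #S ≤ k ∧ A ⊆ ι.image p ∪ S := by
  have hprob := isProbabilityMeasure_uniformOn A.finite_toSet hA
  have hae (B : Finset X) : (∀ᵐ x ∂uniformOn (A : Set X), x ∈ B) ↔ A ⊆ B := by
    rw [ae_iff, uniformOn_eq_zero_iff A.finite_toSet, ← Set.disjoint_iff_inter_eq_empty]
    exact Set.disjoint_compl_right_iff_subset.trans coe_subset
  simp only [mem_stratum_iff_ae_mem, hprob, true_and, hae]

theorem stratum_subset_iff_forall_exists_union_subset_union :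
    Stratum p k₁ ι₁ ⊆ Stratum p k₂ ι₂ ↔ ∀ S : Finset X, #S ≤ k₁ →
      ∃ T : Finset X, #T ≤ k₂ ∧ ι₁.image p ∪ S ⊆ ι₂.image p ∪ T := by
  constructor
  · intro h S hS
    obtain hempty | hA := (ι₁.image p ∪ S).eq_empty_or_nonempty
    · exact ⟨∅, by simp, by simp [hempty]⟩
    · exact (uniformOn_mem_stratum_iff hA).mp
        (h ((uniformOn_mem_stratum_iff hA).mpr ⟨S, hS, Subset.rfl⟩))
  · intro h μ hμ
    obtain ⟨hprob, S, hSk, hS⟩ := mem_stratum_iff_ae_mem.mp hμ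
    obtain ⟨T, hTk, hST⟩ := h S hSk
    exact mem_stratum_iff_ae_mem.mpr ⟨hprob, T, hTk, hS.mono fun _ hx => hST hx⟩

end Stratum

theorem stratum_subset_iff_general [Infinite X] [MeasurableSpace X] [MeasurableSingletonClass X]
    {m : ℕ} {p : Fin m → X} (hp : Function.Injective p) {k₁ k₂ : ℕ} {ι₁ ι₂ : Finset (Fin m)} :
    Stratum p k₁ ι₁ ⊆ Stratum p k₂ ι₂ ↔ k₁ ≤ k₂ ∧ #(ι₁ \ ι₂) ≤ k₂ - k₁ := by
  classical
  rw [stratum_subset_iff_forall_exists_union_subset_union, forall_exists_union_subset_union_iff,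
    ← image_sdiff _ _ hp, card_image_of_injective _ hp]
  lia

/-- `Σ^{k₁,l₁}_{ι₁} ⊆ Σ^{k₂,l₂}_{ι₂}` iff `k₁ ≤ k₂` and
`card (ι₁ \ ι₂) ≤ k₂ - k₁`. -/
theorem stratum_subset_iff
    [MetricSpace X] [CompactSpace X] [Infinite X] [MeasurableSpace X] [BorelSpace X]
    {m : ℕ} (hm : 1 ≤ m) (p : Fin m → X) (hp : Function.Injective p)
    (α : Fin m → ℝ) (hα : ∀ j, -1 < α j ∧ α j < 0) (hmono : Monotone α)
    (ρ : ℝ) (hρ : 0 < ρ)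
    (k₁ k₂ : ℕ) (ι₁ ι₂ : Finset (Fin m))
    (h₁ : Admissible α ρ k₁ ι₁) (h₂ : Admissible α ρ k₂ ι₂) :
    Stratum p k₁ ι₁ ⊆ Stratum p k₂ ι₂ ↔
      k₁ ≤ k₂ ∧ (ι₁ \ ι₂).card ≤ k₂ - k₁ :=
  stratum_subset_iff_general hp
end

section
/- Let Σ^{k_1,l_1}_{ι_1} and Σ^{k_2,l_2}_{ι_2} be strata associated to admissible triplets. Then the intersection Σ^{k_1,l_1}_{ι_1} ∩ Σ^{k_2,l_2}_{ι_2} is equal to the union of all strata Σ^{k,l}_ι, over admissible triplets (k, l, ι), such that Σ^{k,l}_ι ⊆ Σ^{k_1,l_1}_{ι_1} and Σ^{k,l}_ι ⊆ Σ^{k_2,l_2}_{ι_2}. -/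
open MeasureTheory Metric
open scoped NNReal ENNReal BigOperators

variable {X : Type*}

/-!
A probability measure lies in `Σ^{k,l}_ι` iff some finite set `S` carries it and has at most `k`
points outside `{p_i : i ∈ ι}`. If `S₁` and `S₂` carry `μ`, then so does `T = S₁ ∩ S₂`. With `ι`
the set of indices `i` such that `p_i ∈ T`, and `k` the number of points of `T` that are not one of
the `p_i`, the stratum of `(k, ι)` contains `μ`, and `k + #(ι \ ι_a) = #(T \ p(ι_a)) ≤ k_a` for
`a = 1, 2`. This inequality gives the inclusion of the strata, and also the admissibility of
`(k, ι)`, because each index of `ι \ ι_a` has weight `1 + α_j ≤ 1`.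
-/

section

open scoped Finset

lemma card_sdiff_image_univ_add_card_filter_sdiff {I : Type*} [Fintype I] [DecidableEq I]
    [DecidableEq X] {p : I → X} (hp : Function.Injective p) (T : Finset X) (J : Finset I) :
    #(T \ Finset.univ.image p) + #(({i | p i ∈ T} : Finset I) \ J) = #(T \ J.image p) := by
  have disjoint_parts :
      Disjoint (T \ Finset.univ.image p) ((({i | p i ∈ T} : Finset I) \ J).image p) :=
    Finset.sdiff_disjoint.mono_right (Finset.image_subset_image (Finset.subset_univ _))
  rw [← Finset.card_image_of_injective _ hp, ← Finset.card_union_of_disjoint disjoint_parts]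
  congr 1
  ext x
  by_cases hx : ∃ i, p i = x
  · obtain ⟨i, rfl⟩ := hx
    simp [hp.eq_iff]
  · have not_image (i : I) : p i ≠ x := fun hi => hx ⟨i, hi⟩
    simp [not_image]

lemma exists_sum_fin_smul_eq_sum_smul [Nonempty X] {R M : Type*} [Zero R] [AddCommMonoid M]
    [SMulWithZero R M] (c : X → R) (v : X → M) {T : Finset X} {k : ℕ} (hT : #T ≤ k) :
    ∃ (t : Fin k → R) (q : Fin k → X), ∑ j, t j • v (q j) = ∑ x ∈ T, c x • v x := by
  obtain ⟨e⟩ : Nonempty (T ↪ Fin k) :=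
    Function.Embedding.nonempty_of_card_le (by simpa using hT)
  refine ⟨Function.extend e (fun x => c x) 0,
    Function.extend e (fun x => x) fun _ => Classical.arbitrary X, ?_⟩
  rw [← Finset.sum_coe_sort T]
  symm
  refine Fintype.sum_of_injective e e.injective _ _ (fun j hj => ?_) fun x => ?_
  · rw [Function.extend_apply' _ _ _ hj, Pi.zero_apply, zero_smul]
  · rw [e.injective.extend_apply, e.injective.extend_apply]

lemma isProbabilityMeasure_sum_smul_dirac_add_iff [MeasurableSpace X] {I J : Type*}
    {A : Finset I} {B : Finset J} {s : I → ℝ≥0} {t : J → ℝ≥0} {p : I → X} {q : J → X} :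
    IsProbabilityMeasure (∑ i ∈ A, (s i : ℝ≥0∞) • Measure.dirac (p i)
        + ∑ j ∈ B, (t j : ℝ≥0∞) • Measure.dirac (q j)) ↔
      ∑ i ∈ A, s i + ∑ j ∈ B, t j = 1 := by
  simp only [isProbabilityMeasure_iff, Measure.add_apply, Measure.finsetSum_apply,
    Measure.smul_apply, measure_univ, smul_eq_mul, mul_one]
  norm_cast

lemma Admissible.of_add_card_sdiff_le {m : ℕ} {α : Fin m → ℝ} (hα : ∀ j, α j ∈ Set.Icc (-1) 0)
    {ρ : ℝ} {k k' : ℕ} {ι ι' : Finset (Fin m)} (h : Admissible α ρ k' ι')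
    (hle : k + #(ι \ ι') ≤ k') : Admissible α ρ k ι := by
  have sum_inter_le : ∑ j ∈ ι ∩ ι', (1 + α j) ≤ ∑ j ∈ ι', (1 + α j) :=
    Finset.sum_le_sum_of_subset_of_nonneg Finset.inter_subset_right
      fun j _ _ => by linarith [(hα j).1]
  have sum_sdiff_le : ∑ j ∈ ι \ ι', (1 + α j) ≤ #(ι \ ι') := by
    simpa using Finset.sum_le_card_nsmul (ι \ ι') (fun j => 1 + α j) 1
      fun j _ => by linarith [(hα j).2]
  have hle_real : (k : ℝ) + #(ι \ ι') ≤ k' := by exact_mod_cast hle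
  refine lt_of_le_of_lt (mul_le_mul_of_nonneg_left ?_ (by positivity)) h
  rw [← Finset.sum_inter_add_sum_sdiff ι ι']
  linarith

section Stratum

variable [MeasurableSpace X] {m k k' : ℕ} {p : Fin m → X} {ι ι' : Finset (Fin m)} {μ : Measure X}

lemma isProbabilityMeasure_of_mem_stratum (hμ : μ ∈ Stratum p k ι) : IsProbabilityMeasure μ := by
  obtain ⟨s, t, q, hsum, rfl⟩ := hμ
  exact isProbabilityMeasure_sum_smul_dirac_add_iff.2 hsum

variable [MeasurableSingletonClass X]

lemma exists_ae_mem_finset_of_mem_stratum [DecidableEq X] (hμ : μ ∈ Stratum p k ι) :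
    ∃ S : Finset X, (∀ᵐ x ∂μ, x ∈ S) ∧ #(S \ ι.image p) ≤ k := by
  obtain ⟨s, t, q, -, rfl⟩ := hμ
  refine ⟨ι.image p ∪ Finset.univ.image q, ?_, ?_⟩
  · rw [ae_add_measure_iff, ae_finsetSum_measure_iff, ae_finsetSum_measure_iff]
    exact ⟨fun i hi => Measure.ae_smul_measure (by simpa using .inl ⟨i, hi, rfl⟩) _,
      fun j _ => Measure.ae_smul_measure (by simp) _⟩
  · rw [Finset.union_sdiff_left]
    calc #(Finset.univ.image q \ ι.image p) ≤ #(Finset.univ.image q) :=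
          Finset.card_le_card Finset.sdiff_subset
      _ ≤ k := by simpa using Finset.card_image_le (s := Finset.univ) (f := q)

lemma mem_stratum_of_ae_mem_finset [DecidableEq X] [IsProbabilityMeasure μ]
    (hp : Set.InjOn p ι) {S : Finset X} (hS : ∀ᵐ x ∂μ, x ∈ S)
    (hcard : #(S \ ι.image p) ≤ k) : μ ∈ Stratum p k ι := by
  have : Nonempty X := μ.nonempty_of_neZero
  let w (x : X) : ℝ≥0 := (μ {x}).toNNReal
  have coe_w (x : X) : (w x : ℝ≥0∞) = μ {x} := ENNReal.coe_toNNReal (measure_ne_top μ {x})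
  obtain ⟨t, q, htq⟩ := exists_sum_fin_smul_eq_sum_smul w (Measure.dirac (α := X)) hcard
  have hμ : μ = ∑ i ∈ ι, (w (p i) : ℝ≥0∞) • Measure.dirac (p i)
      + ∑ j, (t j : ℝ≥0∞) • Measure.dirac (q j) := by
    calc μ = ∑ x ∈ ι.image p ∪ S, μ {x} • Measure.dirac x :=
          Measure.ae_mem_finset_iff.1 (hS.mono fun x => Finset.mem_union_right _)
      _ = ∑ x ∈ ι.image p, μ {x} • Measure.dirac x
          + ∑ x ∈ S \ ι.image p, μ {x} • Measure.dirac x := by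
        rw [← Finset.union_sdiff_self_eq_union, Finset.sum_union Finset.disjoint_sdiff]
      _ = ∑ i ∈ ι, (w (p i) : ℝ≥0∞) • Measure.dirac (p i)
          + ∑ j, (t j : ℝ≥0∞) • Measure.dirac (q j) := by
        simp only [← coe_w, Finset.sum_image hp]
        exact congrArg _ htq.symm
  refine ⟨fun i => w (p i), t, q, ?_, hμ⟩
  rw [← isProbabilityMeasure_sum_smul_dirac_add_iff (p := p) (q := q), ← hμ]
  infer_instance

lemma stratum_subset_stratum (hp : Set.InjOn p ι') (h : k + #(ι \ ι') ≤ k') :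
    Stratum p k ι ⊆ Stratum p k' ι' := by
  classical
  intro μ hμ
  have := isProbabilityMeasure_of_mem_stratum hμ
  obtain ⟨S, hS, hcard⟩ := exists_ae_mem_finset_of_mem_stratum hμ
  refine mem_stratum_of_ae_mem_finset hp hS ?_
  calc #(S \ ι'.image p) ≤ #(S \ ι.image p ∪ (ι \ ι').image p) :=
        Finset.card_le_card fun x => by
          simp only [Finset.mem_sdiff, Finset.mem_union, Finset.mem_image]
          grind
    _ ≤ #(S \ ι.image p) + #(ι \ ι') :=
        (Finset.card_union_le _ _).trans (by gcongr; exact Finset.card_image_le)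
    _ ≤ k' := by omega

lemma exists_mem_stratum_of_mem_of_mem (hp : Function.Injective p)
    {k₁ k₂ : ℕ} {ι₁ ι₂ : Finset (Fin m)} (h₁ : μ ∈ Stratum p k₁ ι₁) (h₂ : μ ∈ Stratum p k₂ ι₂) :
    ∃ (k : ℕ) (ι : Finset (Fin m)),
      μ ∈ Stratum p k ι ∧ k + #(ι \ ι₁) ≤ k₁ ∧ k + #(ι \ ι₂) ≤ k₂ := by
  classical
  have := isProbabilityMeasure_of_mem_stratum h₁
  obtain ⟨S₁, hS₁, hcard₁⟩ := exists_ae_mem_finset_of_mem_stratum h₁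
  obtain ⟨S₂, hS₂, hcard₂⟩ := exists_ae_mem_finset_of_mem_stratum h₂
  let T := S₁ ∩ S₂
  have hT : ∀ᵐ x ∂μ, x ∈ T := by
    filter_upwards [hS₁, hS₂] with x hx₁ hx₂ using Finset.mem_inter.2 ⟨hx₁, hx₂⟩
  have card_eq := card_sdiff_image_univ_add_card_filter_sdiff hp T
  refine ⟨#(T \ Finset.univ.image p), ({i | p i ∈ T} : Finset (Fin m)),
    mem_stratum_of_ae_mem_finset hp.injOn hT ?_, ?_, ?_⟩
  · rw [← card_eq, sdiff_self, Finset.bot_eq_empty, Finset.card_empty, add_zero]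
  · exact (card_eq ι₁).trans_le <| (Finset.card_le_card <|
      Finset.sdiff_subset_sdiff Finset.inter_subset_left le_rfl).trans hcard₁
  · exact (card_eq ι₂).trans_le <| (Finset.card_le_card <|
      Finset.sdiff_subset_sdiff Finset.inter_subset_right le_rfl).trans hcard₂

end Stratum

end

theorem stratum_inter_eq_union_general [MeasurableSpace X] [MeasurableSingletonClass X]
    {m : ℕ} {p : Fin m → X} (hp : Function.Injective p)
    {α : Fin m → ℝ} (hα : ∀ j, α j ∈ Set.Icc (-1) 0) {ρ : ℝ}
    {k₁ : ℕ} (k₂ : ℕ) {ι₁ : Finset (Fin m)} (ι₂ : Finset (Fin m)) (h₁ : Admissible α ρ k₁ ι₁) :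
    Stratum p k₁ ι₁ ∩ Stratum p k₂ ι₂ =
      ⋃ (k : ℕ) (ι : Finset (Fin m))
        (_ : Admissible α ρ k ι ∧ Stratum p k ι ⊆ Stratum p k₁ ι₁ ∧
             Stratum p k ι ⊆ Stratum p k₂ ι₂),
        Stratum p k ι := by
  apply Set.Subset.antisymm
  · rintro μ ⟨hμ₁, hμ₂⟩
    obtain ⟨k, ι, hμ, hle₁, hle₂⟩ := exists_mem_stratum_of_mem_of_mem hp hμ₁ hμ₂
    simp only [Set.mem_iUnion]
    exact ⟨k, ι, ⟨h₁.of_add_card_sdiff_le hα hle₁, stratum_subset_stratum hp.injOn hle₁,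
      stratum_subset_stratum hp.injOn hle₂⟩, hμ⟩
  · exact Set.iUnion_subset fun k => Set.iUnion_subset fun ι => Set.iUnion_subset
      fun ⟨_, hsub₁, hsub₂⟩ => Set.subset_inter hsub₁ hsub₂

/-- the intersection of two admissible strata is the union of all admissible
strata contained in both. -/
theorem stratum_inter_eq_union
    [MetricSpace X] [CompactSpace X] [Infinite X] [MeasurableSpace X] [BorelSpace X]
    {m : ℕ} (hm : 1 ≤ m) (p : Fin m → X) (hp : Function.Injective p)
    (α : Fin m → ℝ) (hα : ∀ j, -1 < α j ∧ α j < 0) (hmono : Monotone α)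
    (ρ : ℝ) (hρ : 0 < ρ)
    (k₁ k₂ : ℕ) (ι₁ ι₂ : Finset (Fin m))
    (h₁ : Admissible α ρ k₁ ι₁) (h₂ : Admissible α ρ k₂ ι₂) :
    Stratum p k₁ ι₁ ∩ Stratum p k₂ ι₂ =
      ⋃ (k : ℕ) (ι : Finset (Fin m))
        (_ : Admissible α ρ k ι ∧ Stratum p k ι ⊆ Stratum p k₁ ι₁ ∧
             Stratum p k ι ⊆ Stratum p k₂ ι₂),
        Stratum p k ι :=
  stratum_inter_eq_union_general hp (fun j => ⟨(hα j).1.le, (hα j).2.le⟩) k₂ ι₂ h₁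
end

section
/- Let (X, dX) be a compact metric space and μ a finite Borel measure on X. Let l ≥ 1 be an integer and let ε > 0 and r > 0. Then there exist ε̄ ∈ (0, ε) and r̄ > 0, depending only on X, μ, l, ε and r, with the following property: for every nonnegative function f ∈ L^1(X, μ) with ∫_X f dμ = 1 which satisfies ∫_{B_r(x_1) ∪ … ∪ B_r(x_l)} f dμ < 1 − ε for every l-tuple of points x_1, …, x_l ∈ X, there exist points x̄_1, …, x̄_{l+1} ∈ X such that ∫_{B_{r̄}(x̄_i)} f dμ ≥ ε̄ for every i ∈ {1, …, l+1} and the balls B_{2r̄}(x̄_1), …, B_{2r̄}(x̄_{l+1}) are pairwise disjoint. -/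
open MeasureTheory Metric
open scoped NNReal ENNReal BigOperators

/-!
Cover `X` by `N` balls of radius `ρ = r / 5` and call a point heavy if its `ρ`-ball has mass at
least `δ`, where `N * δ ≤ ε`. The light balls of the cover have total mass at most `ε`, so the
`ρ`-neighbourhood of the heavy points has mass at least `1 - ε`. If no `l + 1` heavy points were
`4 * ρ`-separated, a maximal separated family would exhibit `l` points whose `4 * ρ`-balls contain
all heavy points; their `r`-balls would then have mass at least `1 - ε`.
-/

section Separation

lemma exists_fin_subset_range_of_encard_le {α : Type*} [Nonempty α] {s : Set α} {n : ℕ}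
    (hs : s.encard ≤ n) : ∃ x : Fin n → α, s ⊆ Set.range x := by
  have : Finite s := Set.finite_of_encard_le_coe hs
  have := Fintype.ofFinite s
  have hcard : Fintype.card s ≤ Fintype.card (Fin n) := by
    rwa [Fintype.card_fin, ← Set.toFinset_card, ← Nat.cast_le (α := ℕ∞),
      ← Set.encard_eq_coe_toFinset_card]
  obtain ⟨e⟩ := Function.Embedding.nonempty_of_card_le hcard
  exact ⟨Function.extend e (↑) fun _ => Classical.arbitrary α,
    fun a ha => ⟨e ⟨a, ha⟩, e.injective.extend_apply _ _ _⟩⟩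

lemma exists_injective_fin_of_le_encard {α : Type*} {s : Set α} {n : ℕ} (hs : n ≤ s.encard) :
    ∃ x : Fin n → α, Function.Injective x ∧ ∀ i, x i ∈ s := by
  obtain ⟨t, hts, ht⟩ := Set.exists_subset_encard_eq hs
  have : Finite t := Set.finite_of_encard_eq_coe ht
  have hcard : Nat.card t = n := by
    rw [Nat.card_coe_set_eq, Set.ncard, ht, ENat.toNat_natCast]
  let e := Finite.equivFinOfCardEq hcard
  exact ⟨fun i => e.symm i, Subtype.val_injective.comp e.symm.injective,
    fun i => hts (e.symm i).2⟩

variable {X : Type*} [PseudoEMetricSpace X]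

lemma exists_fin_separated_or_exists_fin_isCover [Nonempty X] (s : ℝ≥0) (A : Set X) (n : ℕ) :
    (∃ x : Fin (n + 1) → X, (∀ i, x i ∈ A) ∧ Pairwise fun i j => s < edist (x i) (x j)) ∨
      ∃ x : Fin n → X, IsCover s A (Set.range x) := by
  rcases lt_or_ge (n : ℕ∞) (packingNumber s A) with hn | hn
  · left
    obtain ⟨C, hCA, hC, hnC⟩ : ∃ C ⊆ A, IsSeparated s C ∧ n < C.encard := by
      simpa only [packingNumber, lt_iSup_iff, exists_prop] using hn
    obtain ⟨x, hx, hxC⟩ := exists_injective_fin_of_le_encard (n := n + 1)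
      (by simpa using Order.add_one_le_of_lt hnC)
    exact ⟨x, fun i => hCA (hxC i), fun i j hij => hC (hxC i) (hxC j) (hx.ne hij)⟩
  · right
    have hfin : packingNumber s A ≠ ⊤ := (hn.trans_lt (ENat.natCast_lt_top n)).ne
    obtain ⟨x, hx⟩ := exists_fin_subset_range_of_encard_le
      ((encard_maximalSeparatedSet hfin).trans_le hn)
    exact ⟨x, (isCover_maximalSeparatedSet hfin).mono hx⟩

lemma thickening_subset_thickening_add_of_isCover {s : ℝ≥0} {A C : Set X} (hAC : IsCover s A C)
    (ρ : ℝ) : thickening ρ A ⊆ thickening (ρ + s) C := by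
  have hA : A ⊆ cthickening s C := fun a ha => by
    obtain ⟨c, hc, hac⟩ := hAC ha
    exact mem_cthickening_of_edist_le _ _ _ _ hc (by simpa using hac)
  exact (thickening_subset_of_subset ρ hA).trans (thickening_cthickening_subset ρ s.2 C)

end Separation

section HeavyCenters

variable {X : Type*} [PseudoMetricSpace X] [MeasurableSpace X]

/-- The points around which `ν` concentrates: those whose ball of radius `ρ` has mass at
least `δ`. -/
def heavyCenters (ν : Measure X) (ρ δ : ℝ) : Set X := {x | δ ≤ ν.real (ball x ρ)}

lemma measureReal_le_thickening_heavyCenters_add (ν : Measure X) [IsFiniteMeasure ν] {A : Set X}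
    {t : Finset X} {ρ δ : ℝ} (hA : A ⊆ ⋃ c ∈ t, ball c ρ) (hδ : 0 ≤ δ) :
    ν.real A ≤ ν.real (thickening ρ (heavyCenters ν ρ δ)) + t.card * δ := by
  classical
  set light : Finset X := {c ∈ t | ν.real (ball c ρ) < δ}
  have hcover : A ⊆ thickening ρ (heavyCenters ν ρ δ) ∪ ⋃ c ∈ light, ball c ρ := fun y hy => by
    obtain ⟨c, hct, hyc⟩ := Set.mem_iUnion₂.1 (hA hy)
    rcases lt_or_ge (ν.real (ball c ρ)) δ with hc | hc
    · exact .inr (Set.mem_biUnion (Finset.mem_filter.2 ⟨hct, hc⟩) hyc)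
    · exact .inl (ball_subset_thickening (E := heavyCenters ν ρ δ) hc ρ hyc)
  have hmass : ν.real (⋃ c ∈ light, ball c ρ) ≤ t.card * δ :=
    calc ν.real (⋃ c ∈ light, ball c ρ)
        ≤ ∑ c ∈ light, ν.real (ball c ρ) := measureReal_biUnion_finset_le light _
      _ ≤ light.card * δ := by
        simpa only [nsmul_eq_mul] using
          Finset.sum_le_card_nsmul light _ δ fun c hc => (Finset.mem_filter.1 hc).2.le
      _ ≤ t.card * δ := by gcongr; exact Finset.filter_subset _ _
  calc ν.real A
      ≤ ν.real (thickening ρ (heavyCenters ν ρ δ) ∪ ⋃ c ∈ light, ball c ρ) :=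
        measureReal_mono hcover
    _ ≤ ν.real (thickening ρ (heavyCenters ν ρ δ)) + ν.real (⋃ c ∈ light, ball c ρ) :=
        measureReal_union_le _ _
    _ ≤ ν.real (thickening ρ (heavyCenters ν ρ δ)) + t.card * δ := by gcongr

lemma exists_fin_mem_heavyCenters_separated [Nonempty X] (ν : Measure X) [IsFiniteMeasure ν]
    {A : Set X} {t : Finset X} {ρ δ : ℝ} {s : ℝ≥0} {l : ℕ} (hA : A ⊆ ⋃ c ∈ t, ball c ρ)
    (hδ : 0 ≤ δ)
    (hν : ∀ x : Fin l → X, ν.real (⋃ i, ball (x i) (ρ + s)) + t.card * δ < ν.real A) :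
    ∃ x : Fin (l + 1) → X, (∀ i, x i ∈ heavyCenters ν ρ δ) ∧
      Pairwise fun i j => s < edist (x i) (x j) := by
  refine (exists_fin_separated_or_exists_fin_isCover s (heavyCenters ν ρ δ) l).resolve_right ?_
  rintro ⟨x, hx⟩
  have hsub : thickening ρ (heavyCenters ν ρ δ) ⊆ ⋃ i, ball (x i) (ρ + s) := by
    simpa only [thickening_eq_biUnion_ball, Set.biUnion_range] using
      thickening_subset_thickening_add_of_isCover hx ρ
  have hle := measureReal_le_thickening_heavyCenters_add ν hA hδ
  linarith [hν x, measureReal_mono (μ := ν) hsub]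

theorem exists_fin_disjoint_heavy_balls (hX : TotallyBounded (Set.univ : Set X)) {ε r : ℝ}
    (hε : 0 < ε) (hr : 0 < r) :
    ∃ δ ρ : ℝ, 0 < δ ∧ δ < ε ∧ 0 < ρ ∧
      ∀ (ν : Measure X) [IsProbabilityMeasure ν] (l : ℕ),
        (∀ x : Fin l → X, ν.real (⋃ i, ball (x i) r) < 1 - ε) →
        ∃ x : Fin (l + 1) → X, (∀ i, δ ≤ ν.real (ball (x i) ρ)) ∧
          Pairwise fun i j => Disjoint (ball (x i) (2 * ρ)) (ball (x j) (2 * ρ)) := by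
  obtain ⟨ρ, hρr⟩ : ∃ ρ : ℝ≥0, (5 * ρ : ℝ) = r :=
    ⟨⟨r / 5, by positivity⟩, mul_div_cancel₀ r (by norm_num)⟩
  have hρ : (0 : ℝ) < ρ := by linarith
  obtain ⟨t, ht, hcover⟩ := totallyBounded_iff.1 hX ρ hρ
  lift t to Finset X using ht
  obtain ⟨δ, hδ, hδε, htδ⟩ : ∃ δ, 0 < δ ∧ δ < ε ∧ t.card * δ ≤ ε := by
    have hsum : t.card * (ε / (t.card + 2)) + 2 * (ε / (t.card + 2)) = ε := by field_simp
    have hpos : 0 < ε / (t.card + 2) := by positivity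
    have hnonneg : 0 ≤ t.card * (ε / (t.card + 2)) := by positivity
    exact ⟨ε / (t.card + 2), hpos, by linarith, by linarith⟩
  refine ⟨δ, ρ, hδ, hδε, hρ, fun ν _ l hν => ?_⟩
  have := nonempty_of_isProbabilityMeasure ν
  have hradius : (ρ + (4 * ρ : ℝ≥0) : ℝ) = r := by push_cast; linarith
  obtain ⟨x, hx, hsep⟩ := exists_fin_mem_heavyCenters_separated ν (s := 4 * ρ) (l := l)
    hcover hδ.le fun x => by
      rw [hradius, probReal_univ]
      linarith [hν x]
  refine ⟨x, hx, fun i j hij => ball_disjoint_ball ?_⟩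
  have hdist : (4 * ρ : ℝ≥0) < edist (x i) (x j) := hsep hij
  rw [edist_nndist, ENNReal.coe_lt_coe, ← NNReal.coe_lt_coe, coe_nndist] at hdist
  push_cast at hdist
  linarith

end HeavyCenters

section Density

variable {X : Type*} [MeasurableSpace X] {μ : Measure X} {f : X → ℝ}

lemma measureReal_withDensity_ofReal (hf : AEStronglyMeasurable f μ) (hf0 : 0 ≤ᵐ[μ] f)
    {s : Set X} (hs : MeasurableSet s) :
    (μ.withDensity fun x => ENNReal.ofReal (f x)).real s = ∫ x in s, f x ∂μ := by
  rw [measureReal_def, withDensity_apply _ hs,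
    integral_eq_lintegral_of_nonneg_ae (ae_restrict_of_ae hf0) hf.restrict]

lemma isProbabilityMeasure_withDensity_ofReal (hf : Integrable f μ) (hf0 : 0 ≤ᵐ[μ] f)
    (hf1 : ∫ x, f x ∂μ = 1) :
    IsProbabilityMeasure (μ.withDensity fun x => ENNReal.ofReal (f x)) where
  measure_univ := by
    rw [withDensity_apply _ .univ, setLIntegral_univ,
      ← ofReal_integral_eq_lintegral_ofReal hf hf0, hf1, ENNReal.ofReal_one]

end Density

theorem concentration_alternative_general
    {X : Type*} [PseudoMetricSpace X] [MeasurableSpace X] [OpensMeasurableSpace X]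
    (hX : TotallyBounded (Set.univ : Set X)) {ε r : ℝ} (hε : 0 < ε) (hr : 0 < r) :
    ∃ εb rb : ℝ, 0 < εb ∧ εb < ε ∧ 0 < rb ∧
      ∀ (μ : Measure X) (l : ℕ) (f : X → ℝ), Integrable f μ → 0 ≤ᵐ[μ] f → (∫ x, f x ∂μ) = 1 →
        (∀ x : Fin l → X, (∫ y in ⋃ i, ball (x i) r, f y ∂μ) < 1 - ε) →
        ∃ xb : Fin (l + 1) → X, (∀ i, εb ≤ ∫ y in ball (xb i) rb, f y ∂μ) ∧
          ∀ i j, i ≠ j → Disjoint (ball (xb i) (2 * rb)) (ball (xb j) (2 * rb)) := by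
  obtain ⟨δ, ρ, hδ, hδε, hρ, hballs⟩ := exists_fin_disjoint_heavy_balls hX hε hr
  refine ⟨δ, ρ, hδ, hδε, hρ, fun μ l f hf hf0 hf1 hconc => ?_⟩
  have := isProbabilityMeasure_withDensity_ofReal hf hf0 hf1
  have hmass {S : Set X} (hS : MeasurableSet S) := measureReal_withDensity_ofReal hf.1 hf0 hS
  obtain ⟨x, hx, hdisj⟩ := hballs _ l fun x =>
    (hmass (.iUnion fun _ => measurableSet_ball)).trans_lt (hconc x)
  exact ⟨x, fun i => (hx i).trans_eq (hmass measurableSet_ball), fun _ _ hij => hdisj hij⟩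

/-- a quantitative covering/concentration alternative on a compact metric
measure space: if no `l` balls of radius `r` capture mass `1 - ε` of `f dμ`, then `l + 1`
well-separated balls of a fixed radius `r̄` each capture a fixed amount `ε̄` of mass. -/
theorem concentration_alternative
    {X : Type*} [MetricSpace X] [CompactSpace X] [MeasurableSpace X] [BorelSpace X]
    (μ : MeasureTheory.Measure X) [MeasureTheory.IsFiniteMeasure μ]
    (l : ℕ) (hl : 1 ≤ l) (ε r : ℝ) (hε : 0 < ε) (hr : 0 < r) :
    ∃ εb rb : ℝ, 0 < εb ∧ εb < ε ∧ 0 < rb ∧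
      ∀ f : X → ℝ, MeasureTheory.Integrable f μ → (∀ x, 0 ≤ f x) →
        (∫ x, f x ∂μ) = 1 →
        (∀ x : Fin l → X, (∫ y in ⋃ i, Metric.ball (x i) r, f y ∂μ) < 1 - ε) →
        ∃ xb : Fin (l + 1) → X,
          (∀ i, εb ≤ ∫ y in Metric.ball (xb i) rb, f y ∂μ) ∧
          (∀ i j, i ≠ j →
            Disjoint (Metric.ball (xb i) (2 * rb)) (Metric.ball (xb j) (2 * rb))) := by
  obtain ⟨εb, rb, hεb, hεbε, hrb, hconc⟩ :=
    concentration_alternative_general (isCompact_univ (X := X)).totallyBounded hε hr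
  exact ⟨εb, rb, hεb, hεbε, hrb, fun f hf hf0 => hconc μ l f hf (ae_of_all μ hf0)⟩
end

section
/- Assume 1 ≤ k ≤ m, ρ < 4π, ρ > 4π(1 + α_i) for every 1 ≤ i ≤ k, ρ < 4π(1 + α_i) for every k + 1 ≤ i ≤ m, and ρ < 4π((1 + α_i) + (1 + α_j)) for every pair of indices 1 ≤ i < j ≤ m. Then the space of formal barycenters satisfies Σ_{ρ,α} = { δ_{p_1}, …, δ_{p_k} }, i.e. it consists exactly of the k Dirac masses at the singular points p_1, …, p_k. -/
open MeasureTheory Metric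
open scoped NNReal ENNReal BigOperators Classical

variable {X : Type*}

/-- The weighted cardinality function `χ`: `χ(p_j) = 1 + α_j`, `χ(q) = 1` for regular `q`
(for `p` injective). -/
noncomputable def chi {m : ℕ} (p : Fin m → X) (α : Fin m → ℝ) (q : X) : ℝ :=
  1 + ∑ j, if p j = q then α j else 0

/-- The space of formal barycenters `Σ_{ρ,α}`, as a set of (probability) measures. -/
noncomputable def BarM [MeasurableSpace X] {m : ℕ} (p : Fin m → X) (α : Fin m → ℝ)
    (ρ : ℝ) : Set (Measure X) :=
  {μ | ∃ (J : Finset X) (t : X → ℝ≥0),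
    (∑ q ∈ J, t q) = 1 ∧
    4 * Real.pi * (∑ q ∈ J, chi p α q) < ρ ∧
    μ = ∑ q ∈ J, ((t q : ℝ≥0∞) • Measure.dirac q)}

/-!
Since `χ ≥ 0`, an admissible `J` cannot contain two points whose weights already add up to at
least `ρ / 4π`. This excludes every pair of distinct points: two singular ones by hypothesis, and
a pair with a regular point because that point alone has weight `1 ≥ ρ / 4π`. So `J` is a
singleton, necessarily singular, and its barycenter is a Dirac mass.
-/

theorem card_le_one_of_sum_lt {ι M : Type*} [AddCommMonoid M] [Preorder M]
    [AddLeftMono M] {s : Finset ι} {w : ι → M} {r : M} (hw : ∀ i ∈ s, 0 ≤ w i)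
    (hpair : (s : Set ι).Pairwise fun i j => r ≤ w i + w j) (hsum : ∑ i ∈ s, w i < r) :
    s.card ≤ 1 := by
  refine Finset.card_le_one.2 fun i hi j hj => by_contra fun hij => ?_
  exact ((hpair hi hj hij).trans (Finset.add_le_sum hw hi hj hij)).not_gt hsum

section

variable {m : ℕ} {p : Fin m → X} {α : Fin m → ℝ} {ρ : ℝ}

theorem chi_apply_of_injective (hp : Function.Injective p) (i : Fin m) :
    chi p α (p i) = 1 + α i := by
  simp [chi, hp.eq_iff]

theorem chi_of_notMem_range {q : X} (hq : q ∉ Set.range p) : chi p α q = 1 := by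
  have ne : ∀ i, p i ≠ q := fun i hi => hq ⟨i, hi⟩
  simp [chi, ne]

theorem chi_nonneg (hp : Function.Injective p) (hα : ∀ i, -1 ≤ α i) (q : X) :
    0 ≤ chi p α q := by
  by_cases hq : q ∈ Set.range p
  · obtain ⟨i, rfl⟩ := hq
    rw [chi_apply_of_injective hp]
    linarith [hα i]
  · rw [chi_of_notMem_range hq]
    exact zero_le_one

theorem le_chi_add_chi (hp : Function.Injective p) (hα : ∀ i, -1 ≤ α i) {r : ℝ} (hr : r ≤ 1)
    (hpair : ∀ i j, i < j → r ≤ (1 + α i) + (1 + α j)) {x y : X} (hxy : x ≠ y) :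
    r ≤ chi p α x + chi p α y := by
  by_cases hx : x ∈ Set.range p
  · by_cases hy : y ∈ Set.range p
    · obtain ⟨i, rfl⟩ := hx
      obtain ⟨j, rfl⟩ := hy
      rw [chi_apply_of_injective hp, chi_apply_of_injective hp]
      rcases (ne_of_apply_ne p hxy).lt_or_gt with hij | hji
      · exact hpair i j hij
      · exact (hpair j i hji).trans_eq (add_comm _ _)
    · rw [chi_of_notMem_range hy]
      linarith [chi_nonneg hp hα x]
  · rw [chi_of_notMem_range hx]
    linarith [chi_nonneg hp hα y]

theorem dirac_mem_barM [MeasurableSpace X] {q : X} (hq : 4 * Real.pi * chi p α q < ρ) :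
    Measure.dirac q ∈ BarM p α ρ :=
  ⟨{q}, 1, by simp, by simpa using hq, by simp⟩

theorem barM_eq_diracs_of_pairwise [MeasurableSpace X] (hχ : ∀ q, 0 ≤ chi p α q)
    (hpair : Pairwise fun x y => ρ / (4 * Real.pi) ≤ chi p α x + chi p α y) :
    BarM p α ρ = {μ | ∃ q, 4 * Real.pi * chi p α q < ρ ∧ μ = Measure.dirac q} := by
  refine Set.Subset.antisymm ?_ fun μ ⟨q, hq, hμ⟩ => hμ ▸ dirac_mem_barM hq
  rintro _ ⟨J, t, ht, hJ, rfl⟩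
  have card_le : J.card ≤ 1 :=
    card_le_one_of_sum_lt (fun q _ => hχ q) (hpair.set_pairwise _)
      ((lt_div_iff₀' (by positivity)).2 hJ)
  have nonempty : J.Nonempty := Finset.nonempty_of_sum_ne_zero (ht.trans_ne one_ne_zero)
  obtain ⟨q, rfl⟩ := Finset.card_eq_one.1 (card_le.antisymm nonempty.card_pos)
  rw [Finset.sum_singleton] at ht hJ
  exact ⟨q, hJ, by simp [ht]⟩

theorem barycenters_eq_diracs_general [MeasurableSpace X] (hp : Function.Injective p)
    (hα : ∀ i, -1 ≤ α i) (hρ : ρ ≤ 4 * Real.pi)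
    (hpair : ∀ i j, i < j → ρ ≤ 4 * Real.pi * ((1 + α i) + (1 + α j))) :
    BarM p α ρ =
      {μ | ∃ i, 4 * Real.pi * (1 + α i) < ρ ∧ μ = Measure.dirac (p i)} := by
  have four_pi_pos : 0 < 4 * Real.pi := by positivity
  have pair_le : Pairwise fun x y => ρ / (4 * Real.pi) ≤ chi p α x + chi p α y :=
    fun x y hxy => le_chi_add_chi hp hα ((div_le_one four_pi_pos).2 hρ)
      (fun i j hij => (div_le_iff₀' four_pi_pos).2 (hpair i j hij)) hxy
  rw [barM_eq_diracs_of_pairwise (chi_nonneg hp hα) pair_le]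
  refine Set.Subset.antisymm ?_ fun μ ⟨i, hi, hμ⟩ =>
    ⟨p i, (chi_apply_of_injective hp i).symm ▸ hi, hμ⟩
  rintro μ ⟨q, hq, rfl⟩
  have mem_range : q ∈ Set.range p := by
    by_contra h
    rw [chi_of_notMem_range h, mul_one] at hq
    exact hρ.not_gt hq
  obtain ⟨i, rfl⟩ := mem_range
  exact ⟨i, chi_apply_of_injective hp i ▸ hq, rfl⟩

end

/-- under the stated algebraic conditions, `Σ_{ρ,α}` consists exactly of the
`k` Dirac masses `δ_{p_1}, …, δ_{p_k}`. -/
theorem barycenters_eq_diracs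
    [MetricSpace X] [CompactSpace X] [Infinite X] [MeasurableSpace X] [BorelSpace X]
    {m : ℕ} (hm : 1 ≤ m) (p : Fin m → X) (hp : Function.Injective p)
    (α : Fin m → ℝ) (hα : ∀ j, -1 < α j ∧ α j < 0) (hmono : Monotone α)
    (ρ : ℝ) (hρ : 0 < ρ)
    (k : ℕ) (hk1 : 1 ≤ k) (hkm : k ≤ m)
    (hρ4 : ρ < 4 * Real.pi)
    (hlow : ∀ i : Fin m, (i : ℕ) < k → 4 * Real.pi * (1 + α i) < ρ)
    (hhigh : ∀ i : Fin m, k ≤ (i : ℕ) → ρ < 4 * Real.pi * (1 + α i))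
    (hpair : ∀ i j : Fin m, i < j → ρ < 4 * Real.pi * ((1 + α i) + (1 + α j))) :
    BarM p α ρ = {μ : Measure X | ∃ i : Fin m, (i : ℕ) < k ∧ μ = Measure.dirac (p i)} := by
  rw [barycenters_eq_diracs_general hp (fun i => (hα i).1.le) hρ4.le fun i j h => (hpair i j h).le]
  have lt_iff (i : Fin m) : 4 * Real.pi * (1 + α i) < ρ ↔ (i : ℕ) < k :=
    ⟨fun hi => not_le.1 fun hk => (hhigh i hk).not_gt hi, hlow i⟩
  simp only [lt_iff]
end
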